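/- arXiv:2003.02089 — 4 statements merged into one kernel-verified Lean document; each statement's English description precedes it below -/
import Mathlib

section
/- (Lemma 1) Every global minimizer (p*, η*) of Problem P1 satisfies η* ≥ C_1², where C_1 is the smallest aggregation capability among the K devices. -/
/-!
If `η < C₁²`, the weakest device, and hence every device, has enough power to reach aggregation
level exactly `1` at the denoising factor `C₁²`: transmitting `p_k = C₁² α / h_k²` is feasible
because `C₁ ≤ C_k`. Both squared-deviation terms of the MSE then vanish, leaving only the noise
term `N / C₁²`. As those terms are never negative, the MSE at `(p, η)` is at least `N / η`, which
is strictly larger than `N / C₁²`, so `(p, η)` is not a global minimizer.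
-/

open Finset

noncomputable section

/-- Aggregation level `G_k(p, η) = √(p/(η·α))·h_k`. -/
def aggLevel (α h p η : ℝ) : ℝ := Real.sqrt (p / (η * α)) * h

/-- Aggregation capability `C_k = √(P_k/α)·h_k`. -/
def aggCap (α h P : ℝ) : ℝ := Real.sqrt (P / α) * h

/-- Aggregation MSE `F(p, η)`. -/
def mse (K : ℕ) (α β N : ℝ) (h p : Fin K → ℝ) (η : ℝ) : ℝ :=
  β * α / (β + 1) * ∑ k, (aggLevel α (h k) (p k) η - 1) ^ 2
    + α / (β + 1) * ((∑ k, aggLevel α (h k) (p k) η) - (K : ℝ)) ^ 2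
    + N / η

/-- Feasibility for Problem P1: `0 ≤ p_k ≤ P_k` and `η > 0`. -/
def feasible (K : ℕ) (P p : Fin K → ℝ) (η : ℝ) : Prop :=
  (∀ k, 0 ≤ p k ∧ p k ≤ P k) ∧ 0 < η

/-- Global minimizer of Problem P1. -/
def isGlobalMin (K : ℕ) (α β N : ℝ) (h P p : Fin K → ℝ) (η : ℝ) : Prop :=
  feasible K P p η ∧
    ∀ q η', feasible K P q η' → mse K α β N h p η ≤ mse K α β N h q η'

/-- The subregion `M_l` (1-based `l`; `k ≤ l` means `(k:ℕ) < l` for `k : Fin K`). -/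
def inSubregion (K : ℕ) (P : Fin K → ℝ) (l : ℕ) (p : Fin K → ℝ) : Prop :=
  (∀ k : Fin K, (k : ℕ) < l → p k = P k) ∧
    ∀ k : Fin K, l ≤ (k : ℕ) → 0 ≤ p k ∧ p k < P k

/-- The relaxed subregion `M̃_l`. -/
def inRelaxed (K : ℕ) (P : Fin K → ℝ) (l : ℕ) (p : Fin K → ℝ) : Prop :=
  (∀ k : Fin K, (k : ℕ) < l → p k = P k) ∧
    ∀ k : Fin K, l ≤ (k : ℕ) → 0 ≤ p k

/-- `Σ_{i=1}^l C_i`. -/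
def capSum (K : ℕ) (α : ℝ) (h P : Fin K → ℝ) (l : ℕ) : ℝ :=
  ∑ i ∈ univ.filter fun i : Fin K => (i : ℕ) < l, aggCap α (h i) (P i)

/-- `Σ_{i=1}^l C_i²`. -/
def capSqSum (K : ℕ) (α : ℝ) (h P : Fin K → ℝ) (l : ℕ) : ℝ :=
  ∑ i ∈ univ.filter fun i : Fin K => (i : ℕ) < l, aggCap α (h i) (P i) ^ 2

/-- `Σ_{i=1}^l G_i(P_i, η)`. -/
def levelSum (K : ℕ) (α : ℝ) (h P : Fin K → ℝ) (l : ℕ) (η : ℝ) : ℝ :=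
  ∑ i ∈ univ.filter fun i : Fin K => (i : ℕ) < l, aggLevel α (h i) (P i) η

/-- The closed-form optimal denoising factor `η̃*_l` of Eq. (18). -/
def etaStar (K : ℕ) (α β N : ℝ) (h P : Fin K → ℝ) (l : ℕ) : ℝ :=
  ((β * α / (β + 1) * capSqSum K α h P l
      + β * α / ((β + (K : ℝ) - (l : ℝ)) * (β + 1)) * capSum K α h P l ^ 2 + N)
    / (β * (β + (K : ℝ)) * α / ((β + (K : ℝ) - (l : ℝ)) * (β + 1)) * capSum K α h P l)) ^ 2

/-- The free-coordinate powers `p̃_{l,k}(η)` of Eq. (16). -/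
def pTildeAt (K : ℕ) (α β : ℝ) (h P : Fin K → ℝ) (l : ℕ) (η : ℝ) (k : Fin K) : ℝ :=
  ((β + (K : ℝ) - levelSum K α h P l η) / (β + (K : ℝ) - (l : ℝ))) ^ 2 * α * η / h k ^ 2

/-- The optimal power vector over the relaxed subregion `M̃_l` at a given `η`. -/
def pRelaxOpt (K : ℕ) (α β : ℝ) (h P : Fin K → ℝ) (l : ℕ) (η : ℝ) : Fin K → ℝ :=
  fun k => if (k : ℕ) < l then P k else pTildeAt K α β h P l η k

/-- The closed-form candidate power vector `p̃*_l`. -/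
def pTildeStar (K : ℕ) (α β N : ℝ) (h P : Fin K → ℝ) (l : ℕ) : Fin K → ℝ :=
  pRelaxOpt K α β h P l (etaStar K α β N h P l)

end

/-- **Lemma 1.** Every global minimizer `(p*, η*)` of Problem P1 satisfies
`η* ≥ C_1²`, where `C_1` is the smallest aggregation capability. -/
theorem lemma1_eta_lower_bound
    (K : ℕ) (hK : 0 < K) (h P : Fin K → ℝ)
    (hh : ∀ k, 0 < h k) (hP : ∀ k, 0 < P k)
    (α β N : ℝ) (hα : 0 < α) (hβ : 0 < β) (hN : 0 < N)
    (hord : Monotone fun k : Fin K => aggCap α (h k) (P k))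
    (p : Fin K → ℝ) (η : ℝ)
    (hmin : isGlobalMin K α β N h P p η) :
    aggCap α (h ⟨0, hK⟩) (P ⟨0, hK⟩) ^ 2 ≤ η := by
  obtain ⟨hfeas, hopt⟩ := hmin
  have hη : 0 < η := hfeas.2
  by_contra! hlt
  set C := aggCap α (h ⟨0, hK⟩) (P ⟨0, hK⟩) with hC
  have hCpos : 0 < C := mul_pos (Real.sqrt_pos.2 (div_pos (hP _) hα)) (hh _)
  have hcap : ∀ k, C ^ 2 ≤ P k / α * h k ^ 2 := fun k => by
    have hle : C ≤ aggCap α (h k) (P k) := hord (Fin.mk_le_of_le_val (Nat.zero_le _))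
    calc C ^ 2 ≤ aggCap α (h k) (P k) ^ 2 := by gcongr
      _ = P k / α * h k ^ 2 := by
        rw [aggCap, mul_pow, Real.sq_sqrt (div_pos (hP k) hα).le]
  -- The power for which every aggregation level equals 1 at denoising factor `C ^ 2`.
  let q : Fin K → ℝ := fun k => C ^ 2 * α / h k ^ 2
  have hqfeas : feasible K P q (C ^ 2) := by
    refine ⟨fun k => ⟨by have := hh k; positivity, ?_⟩, by positivity⟩
    have hk := hh k
    have hm := mul_le_mul_of_nonneg_right (hcap k) hα.le
    rw [div_le_iff₀ (by positivity)]
    calc C ^ 2 * α ≤ P k / α * h k ^ 2 * α := hm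
      _ = P k * h k ^ 2 := by field_simp
  have hlevel : ∀ k, aggLevel α (h k) (q k) (C ^ 2) = 1 := fun k => by
    have hk := hh k
    have hratio : q k / (C ^ 2 * α) = (1 / h k) ^ 2 := by
      simp only [q]
      field_simp
    rw [aggLevel, hratio, Real.sqrt_sq (by positivity)]
    field_simp
  have hqval : mse K α β N h q (C ^ 2) = N / C ^ 2 := by
    simp [mse, hlevel]
  have hlower : N / η ≤ mse K α β N h p η := by
    unfold mse
    have hsum : 0 ≤ ∑ k, (aggLevel α (h k) (p k) η - 1) ^ 2 :=
      Finset.sum_nonneg fun k _ => sq_nonneg _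
    exact le_add_of_nonneg_left (by positivity)
  have hstrict : N / C ^ 2 < N / η := div_lt_div_of_pos_left hN hη hlt
  have hle := hopt q (C ^ 2) hqfeas
  rw [hqval] at hle
  exact absurd (hlower.trans hle) (not_le.2 hstrict)
end

section
/- (Lemma 5, boundary equality U_l = L_{l+1}) For every l ∈ {1,…,K−1}, the following two conditions on the parameters (α, β, N) are equivalent: (i) √(η̃*_{l+1})·(β+K) = Σ_{i=1}^{l+1} C_i + (β+K−l−1)·C_{l+1}; (ii) √(η̃*_l)·(β+K) = Σ_{i=1}^l C_i + (β+K−l)·C_{l+1}. (Condition (i) says the relaxed-subregion-(l+1) optimal powers satisfy p̃*_{l+1,k} = C_{l+1}²·α/h_k² for k > l+1, and condition (ii) says the relaxed-subregion-l optimal powers satisfy p̃*_{l,k} = C_{l+1}²·α/h_k² for k > l.) -/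
/-! Write `S`, `Q` for the sums of the first `m` capabilities and of their squares, and
`M = N (β + 1) / (β α)`. Multiplying out the closed form of `η̃*_m` gives
`√η̃*_m · (β + K) · S = (β + K - m) (Q + M) + S²`, so that for any `x` the equation
`√η̃*_m · (β + K) = S + (β + K - m) x` is equivalent to `Q + M = S x`
(`sqrt_etaStar_mul_eq_iff`). Take `x = C_{l+1}`. Passing from `m = l` to `m = l + 1` adds
`C_{l+1}²` to both sides of this last equation, so the two boundary conditions agree. -/

open Finset

theorem aggCap_pos {α h P : ℝ} (hα : 0 < α) (hh : 0 < h) (hP : 0 < P) : 0 < aggCap α h P :=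
  mul_pos (Real.sqrt_pos.2 (div_pos hP hα)) hh

theorem sum_filter_val_lt_succ {K l : ℕ} (hlK : l < K) (f : Fin K → ℝ) :
    ∑ i ∈ univ.filter (fun i : Fin K => (i : ℕ) < l + 1), f i =
      ∑ i ∈ univ.filter (fun i : Fin K => (i : ℕ) < l), f i + f ⟨l, hlK⟩ := by
  have hset : univ.filter (fun i : Fin K => (i : ℕ) < l + 1) =
      insert ⟨l, hlK⟩ (univ.filter fun i : Fin K => (i : ℕ) < l) := by
    ext i
    simp only [mem_filter, mem_univ, true_and, mem_insert, Fin.ext_iff]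
    omega
  rw [hset, sum_insert (by simp), add_comm]

theorem capSum_pos {K : ℕ} (hK : 0 < K) {h P : Fin K → ℝ} {α : ℝ} (hα : 0 < α)
    (hh : ∀ k, 0 < h k) (hP : ∀ k, 0 < P k) {m : ℕ} (hm : 1 ≤ m) :
    0 < capSum K α h P m :=
  sum_pos (fun i _ => aggCap_pos hα (hh i) (hP i)) ⟨⟨0, hK⟩, by simp; omega⟩

/-- The equation `√η̃*_m · (β + K) = Σ C_i + (β + K - m) x` after clearing denominators;
the index `m` survives only in the two sums. -/
theorem sqrt_etaStar_mul_eq_iff {K : ℕ} (hK : 0 < K) {h P : Fin K → ℝ}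
    (hh : ∀ k, 0 < h k) (hP : ∀ k, 0 < P k)
    {α β N : ℝ} (hα : 0 < α) (hβ : 0 < β) (hN : 0 < N)
    {m : ℕ} (hm : 1 ≤ m) (hmK : m ≤ K) (x : ℝ) :
    Real.sqrt (etaStar K α β N h P m) * (β + (K : ℝ)) =
        capSum K α h P m + (β + (K : ℝ) - (m : ℝ)) * x ↔
      capSqSum K α h P m + N * (β + 1) / (β * α) = capSum K α h P m * x := by
  have hS : 0 < capSum K α h P m := capSum_pos hK hα hh hP hm
  have hQ : 0 ≤ capSqSum K α h P m := sum_nonneg fun i _ => sq_nonneg _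
  have hc : 0 < β + (K : ℝ) - (m : ℝ) := by
    have : (m : ℝ) ≤ K := by exact_mod_cast hmK
    linarith
  have hB : 0 < β + (K : ℝ) := by positivity
  unfold etaStar
  generalize capSum K α h P m = S at *
  generalize capSqSum K α h P m = Q at *
  generalize β + (K : ℝ) - (m : ℝ) = c at *
  generalize β + (K : ℝ) = B at *
  rw [Real.sqrt_sq (by positivity)]
  have key : (β * α / (β + 1) * Q + β * α / (c * (β + 1)) * S ^ 2 + N) /
      (β * B * α / (c * (β + 1)) * S) * B =
      S + c * ((Q + N * (β + 1) / (β * α)) / S) := by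
    field_simp
    ring
  rw [key, add_right_inj, mul_right_inj' hc.ne', div_eq_iff hS.ne', mul_comm x]

/-- **Lemma 5 (boundary equality `U_l = L_{l+1}`).** For `l ∈ {1,…,K−1}`, the
condition `√(η̃*_{l+1})·(β+K) = Σ_{i=1}^{l+1} C_i + (β+K−l−1)·C_{l+1}` holds
iff the condition `√(η̃*_l)·(β+K) = Σ_{i=1}^l C_i + (β+K−l)·C_{l+1}` holds. -/
theorem lemma5_boundary_equality
    (K : ℕ) (hK : 0 < K) (h P : Fin K → ℝ)
    (hh : ∀ k, 0 < h k) (hP : ∀ k, 0 < P k)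
    (α β N : ℝ) (hα : 0 < α) (hβ : 0 < β) (hN : 0 < N)
    (hord : Monotone fun k : Fin K => aggCap α (h k) (P k))
    (l : ℕ) (hl1 : 1 ≤ l) (hlK : l < K) :
    (Real.sqrt (etaStar K α β N h P (l + 1)) * (β + (K : ℝ)) =
        capSum K α h P (l + 1)
          + (β + (K : ℝ) - (l : ℝ) - 1) * aggCap α (h ⟨l, hlK⟩) (P ⟨l, hlK⟩)) ↔
      Real.sqrt (etaStar K α β N h P l) * (β + (K : ℝ)) =
        capSum K α h P l
          + (β + (K : ℝ) - (l : ℝ)) * aggCap α (h ⟨l, hlK⟩) (P ⟨l, hlK⟩) := by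
  have hcast : β + (K : ℝ) - (l : ℝ) - 1 = β + (K : ℝ) - ((l + 1 : ℕ) : ℝ) := by
    push_cast
    ring
  have hsum : capSum K α h P (l + 1) =
      capSum K α h P l + aggCap α (h ⟨l, hlK⟩) (P ⟨l, hlK⟩) :=
    sum_filter_val_lt_succ hlK _
  have hsq : capSqSum K α h P (l + 1) =
      capSqSum K α h P l + aggCap α (h ⟨l, hlK⟩) (P ⟨l, hlK⟩) ^ 2 :=
    sum_filter_val_lt_succ hlK _
  rw [hcast, sqrt_etaStar_mul_eq_iff hK hh hP hα hβ hN (by omega) hlK,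
    sqrt_etaStar_mul_eq_iff hK hh hP hα hβ hN hl1 hlK.le, hsum, hsq]
  constructor <;> intro H <;> linarith
end

section
/- (Property 1, independence of α) Fix l ∈ {1,…,K} and view the closed-form relaxed-subregion powers as functions of the gradient mean squared norm α, with h_1,…,h_K, P_1,…,P_K, β, N fixed and C_i = √(P_i/α)·h_i. Then the product α·η̃*_l(α) does not depend on α, and consequently for every k > l the power p̃*_{l,k}(α) is constant in α: p̃*_{l,k}(α) = p̃*_{l,k}(α′) for all α, α′ > 0. -/
/-!
Scaling argument: both quantities at a general `α` reduce to their values at `α = 1`.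
Since `C_i(α) = C_i(1) / √α`, the numerator of `√η̃*_l` does not depend on `α`, while its
denominator is `√α` times its value at `α = 1`; hence `α · η̃*_l(α) = η̃*_l(1)`
(`mul_etaStar`).  The power `p̃_{l,k}(η)` depends on `α` and `η` only through the product
`α · η` (`pTildeAt_eq_one`), so `p̃*_{l,k}(α)` does not depend on `α` either.
-/

open Finset

lemma aggCap_eq_div_sqrt (α h P : ℝ) (hα : 0 < α) :
    aggCap α h P = aggCap 1 h P / √α := by
  simp only [aggCap, div_one, Real.sqrt_div' P hα.le]
  ring

lemma capSum_eq_div_sqrt (K : ℕ) (α : ℝ) (h P : Fin K → ℝ) (l : ℕ) (hα : 0 < α) :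
    capSum K α h P l = capSum K 1 h P l / √α := by
  simp only [capSum, Finset.sum_div]
  exact Finset.sum_congr rfl fun i _ => aggCap_eq_div_sqrt _ _ _ hα

lemma capSqSum_eq_div (K : ℕ) (α : ℝ) (h P : Fin K → ℝ) (l : ℕ) (hα : 0 < α) :
    capSqSum K α h P l = capSqSum K 1 h P l / α := by
  simp only [capSqSum, Finset.sum_div]
  refine Finset.sum_congr rfl fun i _ => ?_
  rw [aggCap_eq_div_sqrt _ _ _ hα, div_pow, Real.sq_sqrt hα.le]

/-- The normalized denoising factor `α · η̃*_l(α)` equals its value at `α = 1`.  This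
includes the degenerate case of a vanishing denominator in `√η̃*_l`, where both sides are `0`
by the convention `x / 0 = 0`. -/
lemma mul_etaStar (K : ℕ) (α β N : ℝ) (h P : Fin K → ℝ) (l : ℕ) (hα : 0 < α) :
    α * etaStar K α β N h P l = etaStar K 1 β N h P l := by
  have hsq : √α ^ 2 = α := Real.sq_sqrt hα.le
  simp only [etaStar, capSum_eq_div_sqrt K α h P l hα, capSqSum_eq_div K α h P l hα]
  generalize capSum K 1 h P l = S
  generalize capSqSum K 1 h P l = Q
  generalize β + (K : ℝ) - (l : ℝ) = c
  have hnum : β * α / (β + 1) * (Q / α) + β * α / (c * (β + 1)) * (S / √α) ^ 2 + N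
      = β * 1 / (β + 1) * Q + β * 1 / (c * (β + 1)) * S ^ 2 + N := by
    have h1 : β * α / (β + 1) * (Q / α) = β * 1 / (β + 1) * Q * (α / α) := by ring
    have h2 : β * α / (c * (β + 1)) * (S / √α) ^ 2
        = β * 1 / (c * (β + 1)) * S ^ 2 * (α / √α ^ 2) := by ring
    rw [h1, h2, hsq, div_self hα.ne']
    ring
  have hden : β * (β + (K : ℝ)) * α / (c * (β + 1)) * (S / √α)
      = √α * (β * (β + (K : ℝ)) * 1 / (c * (β + 1)) * S) := by
    have h1 : α / √α = √α := Real.div_sqrt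
    calc _ = α / √α * (β * (β + (K : ℝ)) * 1 / (c * (β + 1)) * S) := by ring
      _ = _ := by rw [h1]
  rw [hnum, hden, div_pow, mul_pow, hsq, div_pow]
  rw [← mul_div_assoc, mul_div_mul_left _ _ hα.ne']

/-- The free-coordinate power depends on `α` and `η` only through `α · η`. -/
lemma pTildeAt_eq_one (K : ℕ) (α β : ℝ) (h P : Fin K → ℝ) (l : ℕ) (η : ℝ) (k : Fin K) :
    pTildeAt K α β h P l η k = pTildeAt K 1 β h P l (α * η) k := by
  simp only [pTildeAt, levelSum, aggLevel, mul_one, mul_comm α η, mul_assoc]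

/-- **Property 1 (independence of α).** Fix `l ∈ {1,…,K}` and view the
closed-form quantities as functions of the gradient mean squared norm `α`
(with `h`, `P`, `β`, `N` fixed and `C_i = √(P_i/α)·h_i`).  Then `α·η̃*_l(α)`
does not depend on `α`, and for every `k > l` the power `p̃*_{l,k}(α)` is
constant in `α`. -/
theorem property1_alpha_independence
    (K : ℕ) (hK : 0 < K) (h P : Fin K → ℝ)
    (hh : ∀ k, 0 < h k) (hP : ∀ k, 0 < P k)
    (β N : ℝ) (hβ : 0 < β) (hN : 0 < N)
    (l : ℕ) (hl1 : 1 ≤ l) (hlK : l ≤ K) :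
    ∀ α α' : ℝ, 0 < α → 0 < α' →
      α * etaStar K α β N h P l = α' * etaStar K α' β N h P l ∧
        ∀ k : Fin K, l ≤ (k : ℕ) →
          pTildeStar K α β N h P l k = pTildeStar K α' β N h P l k := by
  intro α α' hα hα'
  have hη : α * etaStar K α β N h P l = α' * etaStar K α' β N h P l := by
    rw [mul_etaStar K α β N h P l hα, mul_etaStar K α' β N h P l hα']
  refine ⟨hη, fun k hk => ?_⟩
  simp only [pTildeStar, pRelaxOpt, if_neg hk.not_gt]
  rw [pTildeAt_eq_one K α, pTildeAt_eq_one K α', hη]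
end

section
/- (Corollary 2: full power transmission when β → 0) Consider the limiting objective F0(p,η) = α·(Σ_{k=1}^K G_k(p_k,η) − K)² + N/η. Then the full-power policy p*_k = P_k for all k ∈ {1,…,K}, together with the denoising factor η* = ((α·(Σ_{i=1}^K C_i)² + N)/(α·K·Σ_{i=1}^K C_i))², is a global minimizer of F0 over the feasible set: F0(p*, η*) ≤ F0(p, η) for all p with 0 ≤ p_k ≤ P_k for every k and all η > 0. -/
/-!
Write `η = s ^ 2` and `x = s⁻¹`. The objective then depends on the powers only through the total
capability `T = Σ_k √(p_k / α) h_k`, and equals the quadratic `α (T x - K)² + N x²` in `x`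
(`mseZero_sq`). Completing the square, its minimum over `x` is `α K² N / (α T² + N)`
(`quadratic_lower_bound`), which decreases as `T ≥ 0` grows. Full power maximizes `T`, and `η*`
corresponds to the minimizing `x = α K T / (α T² + N)` at that maximal `T`.
-/

open Finset

noncomputable section

/-- Limiting objective `F0(p,η) = α·(Σ_k G_k(p_k,η) − K)² + N/η` (the case β → 0). -/
def mseZero (K : ℕ) (α N : ℝ) (h p : Fin K → ℝ) (η : ℝ) : ℝ :=
  α * ((∑ k, aggLevel α (h k) (p k) η) - (K : ℝ)) ^ 2 + N / η

end

/-- In the variable `s = √η`, the objective is a quadratic in `s⁻¹` whose coefficients depend on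
the powers only through the sum of the `aggCap α (h k) (p k)`. -/
lemma mseZero_sq (K : ℕ) (α N : ℝ) (h p : Fin K → ℝ) {s : ℝ} (hs : 0 < s) :
    mseZero K α N h p (s ^ 2) =
      α * ((∑ k, aggCap α (h k) (p k)) * s⁻¹ - (K : ℝ)) ^ 2 + N * s⁻¹ ^ 2 := by
  have hlevel : ∀ k, aggLevel α (h k) (p k) (s ^ 2) = aggCap α (h k) (p k) * s⁻¹ := by
    intro k
    unfold aggLevel aggCap
    rw [mul_comm (s ^ 2) α, ← div_div, Real.sqrt_div' _ (sq_nonneg s), Real.sqrt_sq hs.le]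
    ring
  simp only [mseZero, hlevel, ← Finset.sum_mul]
  rw [div_eq_mul_inv, inv_pow]

/-- The minimum over `x` of the quadratic `α (T x - K)² + N x²`, as a lower bound. -/
lemma quadratic_lower_bound {α N : ℝ} (hα : 0 < α) (hN : 0 < N) (T x K : ℝ) :
    α * K ^ 2 * N / (α * T ^ 2 + N) ≤ α * (T * x - K) ^ 2 + N * x ^ 2 := by
  have hD : 0 < α * T ^ 2 + N := by positivity
  rw [div_le_iff₀ hD]
  -- the difference of the two sides is exactly this square
  nlinarith [sq_nonneg ((α * T ^ 2 + N) * x - α * T * K)]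

/-- **Corollary 2 (full power transmission when β → 0).** The full-power policy
`p*_k = P_k`, together with the denoising factor
`η* = ((α·(Σ_i C_i)² + N)/(α·K·Σ_i C_i))²`, globally minimizes `F0` over the
feasible set. -/
theorem corollary2_full_power_transmission
    (K : ℕ) (hK : 0 < K) (h P : Fin K → ℝ)
    (hh : ∀ k, 0 < h k) (hP : ∀ k, 0 < P k)
    (α N : ℝ) (hα : 0 < α) (hN : 0 < N)
    (hord : Monotone fun k : Fin K => aggCap α (h k) (P k)) :
    ∀ (q : Fin K → ℝ) (η : ℝ), feasible K P q η →
      mseZero K α N h (fun k => P k)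
          (((α * (∑ i, aggCap α (h i) (P i)) ^ 2 + N) /
            (α * (K : ℝ) * ∑ i, aggCap α (h i) (P i))) ^ 2) ≤
        mseZero K α N h q η := by
  intro q η hq
  obtain ⟨hq, hη⟩ := hq
  set S : ℝ := ∑ i, aggCap α (h i) (P i) with hS
  have hKpos : (0 : ℝ) < K := by exact_mod_cast hK
  have hSpos : 0 < S := by
    have : Nonempty (Fin K) := ⟨⟨0, hK⟩⟩
    refine Finset.sum_pos (fun i _ => ?_) Finset.univ_nonempty
    exact mul_pos (Real.sqrt_pos.2 (div_pos (hP i) hα)) (hh i)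
  have hD : 0 < α * S ^ 2 + N := by positivity
  have hs : 0 < (α * S ^ 2 + N) / (α * (K : ℝ) * S) := by positivity
  rw [mseZero_sq K α N h _ hs, ← hS]
  obtain ⟨s, hspos, rfl⟩ : ∃ s : ℝ, 0 < s ∧ η = s ^ 2 :=
    ⟨Real.sqrt η, Real.sqrt_pos.2 hη, (Real.sq_sqrt hη.le).symm⟩
  rw [mseZero_sq K α N h q hspos]
  set T : ℝ := ∑ i, aggCap α (h i) (q i) with hT
  have hT0 : 0 ≤ T :=
    Finset.sum_nonneg fun i _ => mul_nonneg (Real.sqrt_nonneg _) (hh i).le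
  have hTS : T ≤ S := by
    refine Finset.sum_le_sum fun i _ => mul_le_mul_of_nonneg_right ?_ (hh i).le
    exact Real.sqrt_le_sqrt (div_le_div_of_nonneg_right (hq i).2 hα.le)
  calc α * (S * ((α * S ^ 2 + N) / (α * (K : ℝ) * S))⁻¹ - K) ^ 2
        + N * (((α * S ^ 2 + N) / (α * (K : ℝ) * S))⁻¹) ^ 2
      = α * (K : ℝ) ^ 2 * N / (α * S ^ 2 + N) := by
        field_simp
        ring
    _ ≤ α * (K : ℝ) ^ 2 * N / (α * T ^ 2 + N) := by gcongr
    _ ≤ α * (T * s⁻¹ - K) ^ 2 + N * s⁻¹ ^ 2 :=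
        quadratic_lower_bound hα hN T s⁻¹ K
end
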